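/- Let Γ ≤ SL(2,ℝ) be a subgroup and r > 0 be such that d(i, γ·i) ≥ 2r for every γ ∈ Γ with γ ≠ I and γ ≠ −I. Then for every R ≥ √2, the set {γ ∈ Γ : a² + b² + c² + d² ≤ R², where γ = (a b; c d)} is finite and has cardinality at most 2·(cosh(Q + r) − 1)/(cosh r − 1), where Q = arcosh(R²/2). -/

import Mathlib

open scoped UpperHalfPlane MatrixGroups

noncomputable section

/-- The inverse hyperbolic cosine, `arcosh x = log (x + √(x² − 1))`. -/
def arcosh (x : ℝ) : ℝ :=
  Real.log (x + Real.sqrt (x ^ 2 - 1))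

/-- The set of elements of `Γ` whose squared Hilbert–Schmidt norm
`a² + b² + c² + d²` is at most `R²`. -/
def latticeBall (Γ : Subgroup SL(2, ℝ)) (R : ℝ) : Set SL(2, ℝ) :=
  {γ | γ ∈ Γ ∧
    (γ.1 0 0) ^ 2 + (γ.1 0 1) ^ 2 + (γ.1 1 0) ^ 2 + (γ.1 1 1) ^ 2 ≤ R ^ 2}

open MeasureTheory

lemma aux_cosh (γ : SL(2, ℝ)) : Real.cosh (dist (γ • UpperHalfPlane.I) UpperHalfPlane.I)
    = ((γ.1 0 0) ^ 2 + (γ.1 0 1) ^ 2 + (γ.1 1 0) ^ 2 + (γ.1 1 1) ^ 2) / 2 := by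
  have hdet : γ.1 0 0 * γ.1 1 1 - γ.1 0 1 * γ.1 1 0 = 1 := by
    rw [← Matrix.det_fin_two]; exact γ.2
  have hz := UpperHalfPlane.coe_specialLinearGroup_apply γ UpperHalfPlane.I
  simp only [UpperHalfPlane.coe_I, Algebra.algebraMap_self, RingHom.id_apply] at hz
  generalize γ • UpperHalfPlane.I = z at *
  generalize γ.1 0 0 = a at *
  generalize γ.1 0 1 = b at *
  generalize γ.1 1 0 = c at *
  generalize γ.1 1 1 = d at *
  have hcd : 0 < c ^ 2 + d ^ 2 := by
    by_contra hh
    have h1 : c = 0 := by nlinarith [sq_nonneg c, sq_nonneg d]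
    have h2 : d = 0 := by nlinarith [sq_nonneg c, sq_nonneg d]
    simp [h1, h2] at hdet
  have hre : z.re = (a * c + b * d) / (c ^ 2 + d ^ 2) := by
    have := congrArg Complex.re hz
    rw [UpperHalfPlane.coe_re] at this
    rw [this]
    simp [Complex.div_re, Complex.normSq_apply, ← pow_two, add_comm (d ^ 2) (c ^ 2)]
    field_simp
    ring
  have him : z.im = 1 / (c ^ 2 + d ^ 2) := by
    have := congrArg Complex.im hz
    rw [UpperHalfPlane.coe_im] at this
    rw [this, ← hdet]
    simp [Complex.div_im, Complex.normSq_apply, ← pow_two, add_comm (d ^ 2) (c ^ 2)]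
    field_simp
  rw [UpperHalfPlane.cosh_dist', hre, him]
  simp only [UpperHalfPlane.I_re, UpperHalfPlane.I_im]
  field_simp
  linear_combination (-1 - (a * d - b * c)) * hdet

lemma F_int (ρ : ℝ) (hρ : 0 < ρ) :
    IntegrableOn (fun y : ℝ => 2 * √(2 * Real.cosh ρ * y - 1 - y ^ 2) / y ^ 2)
      (Set.Ioo (Real.exp (-ρ)) (Real.exp ρ)) ∧
    ∫ y in (Real.exp (-ρ))..(Real.exp ρ), 2 * √(2 * Real.cosh ρ * y - 1 - y ^ 2) / y ^ 2
      = 2 * Real.pi * (Real.cosh ρ - 1) := by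
  have e1 := Real.exp_pos (-ρ)
  have e2 : Real.exp (-ρ) < Real.exp ρ := Real.exp_lt_exp.2 (by linarith)
  have hs : 0 < Real.sinh ρ := Real.sinh_pos_iff.2 hρ
  have hcs := Real.cosh_sq ρ
  have hmul : Real.exp (-ρ) * Real.exp ρ = 1 := by rw [← Real.exp_add]; simp
  have hc : Real.exp ρ = Real.cosh ρ + Real.sinh ρ := (Real.cosh_add_sinh ρ).symm
  have hc' : Real.exp (-ρ) = Real.cosh ρ - Real.sinh ρ := (Real.cosh_sub_sinh ρ).symm
  generalize Real.exp ρ = v at *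
  generalize Real.exp (-ρ) = u at *
  generalize Real.cosh ρ = c at *
  generalize Real.sinh ρ = s at *
  have hcont : ContinuousOn (fun y : ℝ => 2 * √(2 * c * y - 1 - y ^ 2) / y ^ 2) (Set.Icc u v) := by
    apply ContinuousOn.div (by fun_prop) (by fun_prop)
    intro y hy
    have : 0 < y := by linarith [hy.1]
    positivity
  refine ⟨(hcont.integrableOn_Icc).mono_set Set.Ioo_subset_Icc_self, ?_⟩
  rw [intervalIntegral.integral_eq_sub_of_hasDerivAt_of_le (f := fun y =>
    -2 * √(2 * c * y - 1 - y ^ 2) / y - 2 * c * Real.arcsin ((1 / y - c) / s)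
      - 2 * Real.arcsin ((y - c) / s)) e2.le]
  · have h1 : 2 * c * u - 1 - u ^ 2 = 0 := by nlinarith
    have h2 : 2 * c * v - 1 - v ^ 2 = 0 := by nlinarith
    have h3 : 1 / u = v := by field_simp; linarith
    have h4 : 1 / v = u := by
      have : 0 < v := by linarith
      field_simp; linarith
    have h5 : (u - c) / s = -1 := by rw [hc']; field_simp; ring
    have h6 : (v - c) / s = 1 := by rw [hc]; field_simp; ring
    simp only [h1, h2, h3, h4, h5, h6]
    simp
    ring
  · have h0 : ∀ y ∈ Set.Icc u v, y ≠ 0 := fun y hy => by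
      have : 0 < y := by linarith [hy.1]
      positivity
    refine ContinuousOn.sub (ContinuousOn.sub ?_ ?_) ?_
    · exact ContinuousOn.div (by fun_prop) (by fun_prop) h0
    · refine continuousOn_const.mul (Real.continuous_arcsin.comp_continuousOn ?_)
      exact ((continuousOn_const.div continuousOn_id h0).sub continuousOn_const).div_const _
    · refine continuousOn_const.mul (Real.continuous_arcsin.comp_continuousOn ?_)
      fun_prop
  · intro y hy
    have hy0 : 0 < y := by linarith [hy.1]
    have hq : 0 < 2 * c * y - 1 - y ^ 2 := by nlinarith [mul_pos (sub_pos.2 hy.1) (sub_pos.2 hy.2)]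
    have hw0 := Real.sqrt_pos.2 hq
    have hw2 := Real.sq_sqrt hq.le
    have d1 : HasDerivAt (fun y : ℝ => 2 * c * y - 1 - y ^ 2) (2 * c - 2 * y) y := by
      have := (((hasDerivAt_id y).const_mul (2 * c)).sub_const 1).sub ((hasDerivAt_id y).pow 2)
      convert! this using 1
      simp
    have d2 := ((d1.sqrt hq.ne').const_mul (-2)).div (hasDerivAt_id y) hy0.ne'
    have a1 : √(1 - ((1 / y - c) / s) ^ 2) = √(2 * c * y - 1 - y ^ 2) / (y * s) := by
      rw [Real.sqrt_eq_iff_mul_self_eq_of_pos (by positivity)]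
      field_simp
      nlinarith
    have a2 : √(1 - ((y - c) / s) ^ 2) = √(2 * c * y - 1 - y ^ 2) / s := by
      rw [Real.sqrt_eq_iff_mul_self_eq_of_pos (by positivity)]
      field_simp
      nlinarith
    have p1 : 0 < √(1 - ((1 / y - c) / s) ^ 2) := by rw [a1]; positivity
    have p2 : 0 < √(1 - ((y - c) / s) ^ 2) := by rw [a2]; positivity
    have b1 : (1 / y - c) / s ≠ -1 ∧ (1 / y - c) / s ≠ 1 := by
      constructor <;> intro hh <;> rw [hh] at p1 <;> norm_num at p1
    have b2 : (y - c) / s ≠ -1 ∧ (y - c) / s ≠ 1 := by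
      constructor <;> intro hh <;> rw [hh] at p2 <;> norm_num at p2
    have d3 : HasDerivAt (fun y : ℝ => (1 / y - c) / s) (-(1 / y ^ 2) / s) y := by
      have := ((hasDerivAt_inv hy0.ne').sub_const c).div_const s
      simpa [one_div] using this
    have d4 : HasDerivAt (fun y : ℝ => (y - c) / s) (1 / s) y := by
      exact ((hasDerivAt_id y).sub_const c).div_const s
    have d5 := ((Real.hasDerivAt_arcsin b1.1 b1.2).comp y d3).const_mul (2 * c)
    have d6 := ((Real.hasDerivAt_arcsin b2.1 b2.2).comp y d4).const_mul 2
    convert! (d2.sub d5).sub d6 using 1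
    rw [a1, a2]
    generalize √(2 * c * y - 1 - y ^ 2) = w at *
    simp only [id]
    field_simp
    ring
  · rw [intervalIntegrable_iff_integrableOn_Ioo_of_le e2.le]
    exact (hcont.integrableOn_Icc).mono_set Set.Ioo_subset_Icc_self


open scoped Pointwise ENNReal

lemma vol_ball_smul (γ : SL(2, ℝ)) (r : ℝ) :
    volume (Metric.ball (γ • UpperHalfPlane.I) r) = volume (Metric.ball UpperHalfPlane.I r) := by
  rw [← Metric.smul_ball]
  exact measure_smul volume (Matrix.SpecialLinearGroup.mapGL ℝ γ) (Metric.ball UpperHalfPlane.I r)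

lemma vol_ball (ρ : ℝ) (hρ : 0 < ρ) :
    volume (Metric.ball UpperHalfPlane.I ρ) = ENNReal.ofReal (2 * Real.pi * (Real.cosh ρ - 1)) := by
  obtain ⟨hi, hv⟩ := F_int ρ hρ
  have e1 := Real.exp_pos (-ρ)
  have e2 : Real.exp (-ρ) < Real.exp ρ := Real.exp_lt_exp.2 (by linarith)
  have hs : 0 < Real.sinh ρ := Real.sinh_pos_iff.2 hρ
  have hcs := Real.cosh_sq ρ
  have hmul : Real.exp (-ρ) * Real.exp ρ = 1 := by rw [← Real.exp_add]; simp
  have hc : Real.exp ρ = Real.cosh ρ + Real.sinh ρ := (Real.cosh_add_sinh ρ).symm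
  have hc' : Real.exp (-ρ) = Real.cosh ρ - Real.sinh ρ := (Real.cosh_sub_sinh ρ).symm
  rw [← hv, intervalIntegral.integral_of_le e2.le, integral_Ioc_eq_integral_Ioo,
    ofReal_integral_eq_lintegral_ofReal hi (Filter.Eventually.of_forall fun y => by positivity),
    UpperHalfPlane.volume_eq_lintegral, UpperHalfPlane.image_coe_ball,
    ← lintegral_indicator measurableSet_ball,
    ← Complex.volume_preserving_equiv_real_prod.symm.lintegral_comp_emb
      (MeasurableEquiv.measurableEmbedding _), Measure.volume_eq_prod, lintegral_prod_symm,
    ← lintegral_indicator measurableSet_Ioo]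
  · apply lintegral_congr
    intro y
    have key : ∀ x : ℝ, (Complex.measurableEquivRealProd.symm (x, y) ∈
        Metric.ball (UpperHalfPlane.center UpperHalfPlane.I ρ : ℂ)
          (UpperHalfPlane.I.im * Real.sinh ρ)) ↔ x ^ 2 < 2 * Real.cosh ρ * y - 1 - y ^ 2 := by
      intro x
      rw [Metric.mem_ball, UpperHalfPlane.I_im, one_mul,
        ← sq_lt_sq₀ dist_nonneg hs.le, Complex.dist_eq, Complex.sq_norm, Complex.normSq_apply]
      simp [Complex.measurableEquivRealProd]
      constructor <;> intro hh <;> nlinarith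
    have : ∀ x : ℝ, (Metric.ball (UpperHalfPlane.center UpperHalfPlane.I ρ : ℂ)
          (UpperHalfPlane.I.im * Real.sinh ρ)).indicator
          (fun z : ℂ => (((1 / ‖z.im‖₊) ^ 2 : NNReal) : ℝ≥0∞))
          (Complex.measurableEquivRealProd.symm (x, y)) =
        (Set.Ioo (-√(2 * Real.cosh ρ * y - 1 - y ^ 2)) (√(2 * Real.cosh ρ * y - 1 - y ^ 2))).indicator
          (fun _ => (((1 / ‖y‖₊) ^ 2 : NNReal) : ℝ≥0∞)) x := by
      intro x
      have : Complex.measurableEquivRealProd.symm (x, y) ∈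
        Metric.ball (UpperHalfPlane.center UpperHalfPlane.I ρ : ℂ)
          (UpperHalfPlane.I.im * Real.sinh ρ) ↔ x ∈
          Set.Ioo (-√(2 * Real.cosh ρ * y - 1 - y ^ 2)) (√(2 * Real.cosh ρ * y - 1 - y ^ 2)) := by
        rw [key, Set.mem_Ioo, ← abs_lt, Real.lt_sqrt (abs_nonneg x), sq_abs]
      simp only [Set.indicator, this]
      rfl
    simp only [this]
    rw [lintegral_indicator measurableSet_Ioo, setLIntegral_const, Real.volume_Ioo]
    by_cases hy : y ∈ Set.Ioo (Real.exp (-ρ)) (Real.exp ρ)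
    · rw [Set.indicator_of_mem hy]
      have hy0 : 0 < y := by linarith [hy.1]
      rw [← ENNReal.ofReal_coe_nnreal, ← ENNReal.ofReal_mul (by positivity)]
      congr 1
      simp
      ring
    · rw [Set.indicator_of_notMem hy]
      have : 2 * Real.cosh ρ * y - 1 - y ^ 2 ≤ 0 := by
        have : 0 ≤ (y - Real.exp (-ρ)) * (y - Real.exp ρ) := by
          rw [Set.mem_Ioo, not_and_or, not_lt, not_lt] at hy
          rcases hy with hy | hy <;> nlinarith
        nlinarith
      simp [Real.sqrt_eq_zero_of_nonpos this]
  · apply Measurable.aemeasurable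
    refine Measurable.comp (Measurable.indicator (f := fun z : ℂ => (((1 / ‖z.im‖₊) ^ 2 : NNReal) : ℝ≥0∞)) ?_ measurableSet_ball)
      (MeasurableEquiv.measurable Complex.measurableEquivRealProd.symm)
    fun_prop

lemma aux_sep (Γ : Subgroup SL(2, ℝ)) (r : ℝ)
    (h : ∀ γ ∈ Γ, (γ : Matrix (Fin 2) (Fin 2) ℝ) ≠ 1 →
      (γ : Matrix (Fin 2) (Fin 2) ℝ) ≠ -1 →
      2 * r ≤ dist UpperHalfPlane.I (γ • UpperHalfPlane.I))
    {γ δ : SL(2, ℝ)} (hγ : γ ∈ Γ) (hδ : δ ∈ Γ)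
    (hd : dist (γ • UpperHalfPlane.I) (δ • UpperHalfPlane.I) < 2 * r) : δ = γ ∨ δ = -γ := by
  by_contra hne
  push Not at hne
  have := h (γ⁻¹ * δ) (Γ.mul_mem (Γ.inv_mem hγ) hδ)
    (fun hh => hne.1 (by
      have : γ⁻¹ * δ = 1 := Subtype.ext (by simpa using hh)
      exact (inv_mul_eq_one.1 this).symm))
    (fun hh => hne.2 (by
      have : γ⁻¹ * δ = -1 := Subtype.ext (by simpa using hh)
      rw [inv_mul_eq_iff_eq_mul] at this
      simpa using this))
  rw [← dist_smul γ, smul_smul, mul_inv_cancel_left] at this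
  linarith

lemma neg_smul_I (γ : SL(2, ℝ)) : (-γ) • UpperHalfPlane.I = γ • UpperHalfPlane.I := by
  rw [UpperHalfPlane.ext_iff, UpperHalfPlane.coe_specialLinearGroup_apply,
    UpperHalfPlane.coe_specialLinearGroup_apply]
  simp
  rw [← neg_div_neg_eq]
  ring_nf

lemma aux_count (Γ : Subgroup SL(2, ℝ)) (r : ℝ) (hr : 0 < r)
    (h : ∀ γ ∈ Γ, (γ : Matrix (Fin 2) (Fin 2) ℝ) ≠ 1 →
      (γ : Matrix (Fin 2) (Fin 2) ℝ) ≠ -1 →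
      2 * r ≤ dist UpperHalfPlane.I (γ • UpperHalfPlane.I))
    (R : ℝ) (hR : Real.sqrt 2 ≤ R) (T : Finset SL(2, ℝ)) (hT : ∀ γ ∈ T, γ ∈ latticeBall Γ R) :
    (T.card : ℝ) ≤ 2 * (Real.cosh (arcosh (R ^ 2 / 2) + r) - 1) / (Real.cosh r - 1) := by
  classical
  have hR2 : 1 ≤ R ^ 2 / 2 := by
    have := Real.sqrt_le_iff.1 hR
    linarith [this.2]
  change _ ≤ 2 * (Real.cosh (Real.arcosh (R ^ 2 / 2) + r) - 1) / (Real.cosh r - 1)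
  have hQ0 := Real.arcosh_nonneg hR2
  have hQ := Real.cosh_arcosh hR2
  generalize Real.arcosh (R ^ 2 / 2) = Q at *
  have hcr : 0 < Real.cosh r - 1 := sub_pos.2 (Real.one_lt_cosh.2 hr.ne')
  have hcQ : 0 < Real.cosh (Q + r) - 1 := sub_pos.2 (Real.one_lt_cosh.2 (by linarith))
  have hcard : T.card ≤ 2 * (T.image (fun γ => γ • UpperHalfPlane.I)).card := by
    apply Finset.card_le_mul_card_image
    intro b hb
    obtain ⟨γ, hγ, rfl⟩ := Finset.mem_image.1 hb
    refine (Finset.card_le_card (t := {γ, -γ}) ?_).trans Finset.card_le_two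
    intro δ hδ
    rw [Finset.mem_filter] at hδ
    rw [Finset.mem_insert, Finset.mem_singleton]
    refine aux_sep Γ r h (hT γ hγ).1 (hT δ hδ.1).1 ?_
    rw [hδ.2, dist_self]
    linarith
  set P := T.image (fun γ => γ • UpperHalfPlane.I) with hP
  have hvol : (P.card : ℝ) * (2 * Real.pi * (Real.cosh r - 1)) ≤
      2 * Real.pi * (Real.cosh (Q + r) - 1) := by
    have hdisj : (P : Set ℍ).PairwiseDisjoint (fun p => Metric.ball p r) := by
      intro p hp q hq hpq
      obtain ⟨γ, hγ, rfl⟩ := Finset.mem_image.1 (Finset.mem_coe.1 hp)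
      obtain ⟨δ, hδ, rfl⟩ := Finset.mem_image.1 (Finset.mem_coe.1 hq)
      apply Metric.ball_disjoint_ball
      by_contra hlt
      rcases aux_sep Γ r h (hT γ hγ).1 (hT δ hδ).1 (by push Not at hlt; simpa [two_mul] using hlt)
        with rfl | rfl
      · exact hpq rfl
      · exact hpq (neg_smul_I γ).symm
    have h1 := measure_biUnion_finset (μ := volume) hdisj (fun p _ => measurableSet_ball)
    have h2 : ∑ p ∈ P, volume (Metric.ball p r) =
        ∑ p ∈ P, ENNReal.ofReal (2 * Real.pi * (Real.cosh r - 1)) := by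
      apply Finset.sum_congr rfl
      intro p hp
      obtain ⟨γ, hγ, rfl⟩ := Finset.mem_image.1 hp
      simp only [vol_ball_smul, vol_ball r hr]
    have h3 : (⋃ p ∈ P, Metric.ball p r) ⊆ Metric.ball UpperHalfPlane.I (Q + r) := by
      apply Set.iUnion₂_subset
      intro p hp
      obtain ⟨γ, hγ, rfl⟩ := Finset.mem_image.1 hp
      apply Metric.ball_subset_ball'
      have : dist (γ • UpperHalfPlane.I) UpperHalfPlane.I ≤ Q := by
        rw [← abs_of_nonneg hQ0, ← abs_of_nonneg (dist_nonneg (x := γ • UpperHalfPlane.I)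
          (y := UpperHalfPlane.I)), ← Real.cosh_le_cosh, hQ, aux_cosh]
        linarith [(hT γ hγ).2]
      linarith
    have h4 := measure_mono (μ := volume) h3
    rw [h1, h2, vol_ball _ (by linarith), Finset.sum_const, nsmul_eq_mul,
      ← ENNReal.ofReal_natCast, ← ENNReal.ofReal_mul (by positivity)] at h4
    exact (ENNReal.ofReal_le_ofReal_iff (by positivity)).1 h4
  rw [le_div_iff₀ hcr]
  have hvol' : (P.card : ℝ) * (Real.cosh r - 1) ≤ Real.cosh (Q + r) - 1 := by
    have := Real.pi_pos
    refine le_of_mul_le_mul_left ?_ (show 0 < 2 * Real.pi by positivity)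
    linarith
  have hc2 : (T.card : ℝ) ≤ 2 * P.card := by exact_mod_cast hcard
  nlinarith

/-- Let `Γ ≤ SL(2,ℝ)` and `r > 0` be such that `d(i, γ·i) ≥ 2r` for all `γ ∈ Γ` with
`γ ≠ I, −I`.  Then for every `R ≥ √2`, the set of `γ ∈ Γ` with
`a² + b² + c² + d² ≤ R²` is finite of cardinality at most
`2·(cosh(Q + r) − 1)/(cosh r − 1)`, where `Q = arcosh(R²/2)`. -/
theorem lattice_count_uniform (Γ : Subgroup SL(2, ℝ)) (r : ℝ) (hr : 0 < r)
    (h : ∀ γ ∈ Γ, (γ : Matrix (Fin 2) (Fin 2) ℝ) ≠ 1 →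
      (γ : Matrix (Fin 2) (Fin 2) ℝ) ≠ -1 →
      2 * r ≤ dist UpperHalfPlane.I (γ • UpperHalfPlane.I))
    (R : ℝ) (hR : Real.sqrt 2 ≤ R) :
    (latticeBall Γ R).Finite ∧
      ((latticeBall Γ R).ncard : ℝ) ≤
        2 * (Real.cosh (arcosh (R ^ 2 / 2) + r) - 1) / (Real.cosh r - 1) := by
  have hfin : (latticeBall Γ R).Finite := by
    by_contra hinf
    obtain ⟨n, hn⟩ := exists_nat_gt
      (2 * (Real.cosh (arcosh (R ^ 2 / 2) + r) - 1) / (Real.cosh r - 1))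
    obtain ⟨T, hT, hc⟩ := Set.Infinite.exists_subset_card_eq hinf n
    have := aux_count Γ r hr h R hR T (fun γ hγ => hT hγ)
    rw [hc] at this
    linarith
  refine ⟨hfin, ?_⟩
  rw [Set.ncard_eq_toFinset_card _ hfin]
  exact aux_count Γ r hr h R hR _ (fun γ hγ => by simpa using hγ)
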